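/- Let E : y² = x³ + ax + b be an elliptic curve over ℚ (a, b ∈ ℚ with 4a³ + 27b² ≠ 0). There exists a constant c(E), depending only on E, such that for every squarefree nonzero integer D the quadratic twist E^(D) : y² = x³ + aD²x + bD³ satisfies rank E^(D)(ℚ) ≤ 12·ω(D) + c(E). -/

import Mathlib

open scoped TensorProduct

/-- The rank of an abelian group `G`, i.e. `dim_ℚ (G ⊗_ℤ ℚ)`. -/
noncomputable def grpRank (G : Type*) [AddCommGroup G] : ℕ :=
  Module.finrank ℚ (ℚ ⊗[ℤ] G)

/-- The quadratic twist by `D` of the elliptic curve `y² = x³ + ax + b`,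
namely `y² = x³ + aD²x + bD³`. -/
def quadTwist (a b : ℚ) (D : ℤ) : WeierstrassCurve ℚ :=
  ⟨0, 0, 0, a * (D : ℚ) ^ 2, b * (D : ℚ) ^ 3⟩

/-!
Over the splitting field `K` of the cubic, of degree at most `6`, the twist becomes
`y² = (x - De₁)(x - De₂)(x - De₃)`. Away from the primes dividing `D` or some `eᵢ - eⱼ`, the
valuations of `x - De₁` and `x - De₂` at a rational point are even, so that outside four exceptional
points the complete `2`-descent map `P ↦ (x - De₁, x - De₂)` takes values in `K(S, 2)²` for the set
`S` of these primes, and two points with the same image differ by an element of `2E(K)`. As `S` has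
at most `6ω(D) + O(1)` elements and `K(S, 2)` has at most `2^#S · #K(∅, 2)` elements, the index of
`2E(K)` is at most `2^(12ω(D)) · O(1)`. A height argument then shows that `E(K)` is finitely
generated, so `2^rank` divides this index.
-/

namespace TwoDescent

open WeierstrassCurve WeierstrassCurve.Affine Height IsDedekindDomain HeightOneSpectrum NumberField
open scoped nonZeroDivisors

/-! ### Indices and ranks of abelian groups -/

@[to_additive]
lemma finiteIndex_and_index_le_of_inv_mul_mem {G T : Type*} [Group G] [Finite T] (H : Subgroup G)
    (F : Finset G) (f : G → T)
    (hf : ∀ x, x ∉ F → ∀ y, y ∉ F → f x = f y → x⁻¹ * y ∈ H) :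
    H.FiniteIndex ∧ H.index ≤ Nat.card T + F.card := by
  classical
  let code (q : G ⧸ H) : T ⊕ F :=
    if hq : q.out ∈ F then .inr ⟨q.out, hq⟩ else .inl (f q.out)
  have code_injective : Function.Injective code := by
    intro q r hqr
    by_cases hq : q.out ∈ F <;> by_cases hr : r.out ∈ F <;>
      simp only [code, hq, hr, dite_true, dite_false, Sum.inr.injEq, Sum.inl.injEq, reduceCtorEq,
        Subtype.mk.injEq] at hqr
    · exact Quotient.out_injective hqr
    · rw [← q.out_eq', ← r.out_eq']
      exact QuotientGroup.eq.mpr (hf _ hq _ hr hqr)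
  have := Finite.of_injective code code_injective
  refine ⟨H.finiteIndex_of_finite_quotient, ?_⟩
  simpa [Subgroup.index, Nat.card_sum] using Nat.card_le_card_of_injective code code_injective

lemma pow_finrank_dvd_index_range_nsmul (G : Type*) [AddCommGroup G] [Module.Finite ℤ G] (n : ℕ) :
    n ^ Module.finrank ℤ G ∣ (nsmulAddMonoidHom (α := G) n).range.index := by
  let π : G →+ G ⧸ Submodule.torsion ℤ G := (Submodule.mkQ _).toAddMonoidHom
  have hπ : Function.Surjective π := Submodule.mkQ_surjective _
  have hcomm : π.comp (nsmulAddMonoidHom n) = (nsmulAddMonoidHom n).comp π := by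
    ext x
    simp
  have hmap : (nsmulAddMonoidHom n).range.map π = (nsmulAddMonoidHom n).range := by
    rw [AddMonoidHom.map_range, hcomm, AddMonoidHom.range_comp, AddMonoidHom.range_eq_top.mpr hπ,
      ← AddMonoidHom.range_eq_map]
  rw [← finrank_quotient_eq_of_le_torsion (le_refl (Submodule.torsion ℤ G)),
    ← AddSubgroup.index_range_nsmul, ← hmap]
  exact AddSubgroup.index_map_dvd _ hπ

lemma grpRank_eq_finrank (G : Type*) [AddCommGroup G] : grpRank G = Module.finrank ℤ G := by
  rw [grpRank, IsFractionRing.finrank_right_eq ℤ ℚ]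
  have h := IsLocalizedModule.finrank_eq (nonZeroDivisors ℤ) (TensorProduct.mk ℤ ℚ G 1) le_rfl
  rw [← h]
  -- The two `ℤ`-module structures on the tensor product are equal, but not definitionally.
  congr 1

/-! ### Heights and the Mordell–Weil descent -/

section

variable {K : Type*} [Field K] (W : WeierstrassCurve K)

lemma eval_addSubMap (s t u : K) : (fun i ↦ (addSubMap W i).eval ![s, t, u]) =
    ![s ^ 2 - W.b₄ * s * u - W.b₆ * t * u - W.b₈ * u ^ 2,
      2 * t * s + W.b₂ * s * u + W.b₄ * t * u + W.b₆ * u ^ 2,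
      t ^ 2 - 4 * s * u] := by
  funext i
  fin_cases i <;> simp [addSubMap]

variable [DecidableEq K]

lemma eval_addSubMap_sym2x_of_X_ne {x₁ x₂ y₁ y₂ : K} (h₁ : W.toAffine.Nonsingular x₁ y₁)
    (h₂ : W.toAffine.Nonsingular x₂ y₂) (hx : x₁ ≠ x₂) :
    (fun i ↦ (addSubMap W i).eval ((Point.some x₁ y₁ h₁).sym2x (.some x₂ y₂ h₂))) =
      (x₁ - x₂) ^ 2 • (Point.some x₁ y₁ h₁ + .some x₂ y₂ h₂).sym2x
        (Point.some x₁ y₁ h₁ - .some x₂ y₂ h₂) := by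
  have hx' : x₁ - x₂ ≠ 0 := sub_ne_zero.mpr hx
  have e₁ := (W.toAffine.equation_iff x₁ y₁).mp h₁.1
  have e₂ := (W.toAffine.equation_iff x₂ y₂).mp h₂.1
  rw [sub_eq_add_neg (Point.some ..), Point.neg_some, Point.add_of_X_ne hx, Point.add_of_X_ne hx]
  simp only [Point.sym2x_some_some, eval_addSubMap, addX, slope_of_X_ne hx, negY,
    WeierstrassCurve.b₂, WeierstrassCurve.b₄, WeierstrassCurve.b₆, WeierstrassCurve.b₈,
    Matrix.smul_cons, smul_eq_mul, mul_one, Matrix.smul_empty]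
  congrm ![?_, ?_, ?_]
  · field_simp
    grind
  · field_simp
    grind
  · ring

lemma eval_addSubMap_sym2x_self_of_Y_ne {x y : K} (h : W.toAffine.Nonsingular x y)
    (hy : y ≠ W.toAffine.negY x y) :
    (fun i ↦ (addSubMap W i).eval ((Point.some x y h).sym2x (.some x y h))) =
      (y - W.toAffine.negY x y) ^ 2 • (Point.some x y h + .some x y h).sym2x 0 := by
  have hy' : y - W.toAffine.negY x y ≠ 0 := sub_ne_zero.mpr hy
  have e := (W.toAffine.equation_iff x y).mp h.1
  rw [Point.add_self_of_Y_ne hy]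
  simp only [Point.sym2x_some_some, Point.sym2x_some_zero, eval_addSubMap, addX,
    slope_of_Y_ne rfl hy, Matrix.smul_cons, smul_eq_mul, mul_one, mul_zero, Matrix.smul_empty]
  congrm ![?_, ?_, ?_]
  · field_simp
    simp only [negY, WeierstrassCurve.b₄, WeierstrassCurve.b₆, WeierstrassCurve.b₈]
    grind
  · simp only [negY, WeierstrassCurve.b₂, WeierstrassCurve.b₄, WeierstrassCurve.b₆]
    grind
  · ring

lemma exists_eval_addSubMap_sym2x_self [W.IsElliptic] {x y : K} (h : W.toAffine.Nonsingular x y) :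
    ∃ c : K, c ≠ 0 ∧
      (fun i ↦ (addSubMap W i).eval ((Point.some x y h).sym2x (.some x y h))) =
      c • (Point.some x y h + .some x y h).sym2x 0 := by
  by_cases hy : y = W.toAffine.negY x y
  · obtain ⟨c, hc⟩ : ∃ c : K, (fun i ↦ (addSubMap W i).eval
        ((Point.some x y h).sym2x (.some x y h))) = c • ![1, 0, 0] := by
      refine ⟨(x * x) ^ 2 - W.b₄ * (x * x) - W.b₆ * (x + x) - W.b₈, ?_⟩
      have e := (W.toAffine.equation_iff x y).mp h.1
      simp only [Point.sym2x_some_some, eval_addSubMap, Matrix.smul_cons, smul_eq_mul, mul_one,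
        mul_zero, Matrix.smul_empty]
      congrm ![?_, ?_, ?_]
      · ring
      · simp only [negY, WeierstrassCurve.b₂, WeierstrassCurve.b₄, WeierstrassCurve.b₆] at hy ⊢
        grind
      · ring
    rw [Point.add_self_of_Y_eq hy, Point.sym2x_zero_zero]
    refine ⟨c, ?_, hc⟩
    rintro rfl
    exact addSubMap_ne_zero W (Point.sym2x_ne_zero _ _) (hc.trans (zero_smul K _))
  · exact ⟨_, pow_ne_zero 2 (sub_ne_zero.mpr hy), eval_addSubMap_sym2x_self_of_Y_ne W h hy⟩

lemma exists_eval_addSubMap_sym2x [W.IsElliptic] (P Q : W.toAffine.Point) :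
    ∃ c : K, c ≠ 0 ∧
      (fun i ↦ (addSubMap W i).eval (P.sym2x Q)) = c • (P + Q).sym2x (P - Q) := by
  rcases P with _ | ⟨x₁, y₁, h₁⟩ <;> rcases Q with _ | ⟨x₂, y₂, h₂⟩
  · exact ⟨1, one_ne_zero, by simp [← Point.zero_def, eval_addSubMap]⟩
  · refine ⟨1, one_ne_zero, ?_⟩
    simp [← Point.zero_def, eval_addSubMap, sq, two_mul]
  · refine ⟨1, one_ne_zero, ?_⟩
    simp [← Point.zero_def, eval_addSubMap, sq, two_mul]
  by_cases hx : x₁ = x₂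
  · rcases (Point.X_eq_iff (h₁ := h₁) (h₂ := h₂)).mp hx with hPQ | hPQ
    · rw [← hPQ, sub_self]
      exact exists_eval_addSubMap_sym2x_self W h₁
    · rw [← neg_eq_iff_eq_neg.mpr hPQ, Point.sym2x_neg_right, add_neg_cancel, sub_neg_eq_add,
        Point.sym2x_comm 0]
      exact exists_eval_addSubMap_sym2x_self W h₁
  · exact ⟨_, pow_ne_zero 2 (sub_ne_zero.mpr hx), eval_addSubMap_sym2x_of_X_ne W h₁ h₂ hx⟩

end

section

variable {K : Type*} [Field K] [AdmissibleAbsValues K] (W : WeierstrassCurve K)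

lemma exists_abs_logHeight_sym2x_sub_le : ∃ C, ∀ P Q : W.toAffine.Point,
    |logHeight (P.sym2x Q) - (logHeight P.xRep + logHeight Q.xRep)| ≤ C := by
  obtain ⟨C, hC⟩ := abs_logHeight_sym2_sub_le K
  refine ⟨C, fun P Q ↦ ?_⟩
  have eta (R : W.toAffine.Point) : ![R.xRep 0, R.xRep 1] = R.xRep := by
    funext i
    fin_cases i <;> rfl
  simpa only [eta, Point.sym2x] using
    hC (a := P.xRep 0) (b := P.xRep 1) (c := Q.xRep 0) (d := Q.xRep 1)
      (by simpa only [eta] using P.xRep_ne_zero) (by simpa only [eta] using Q.xRep_ne_zero)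

lemma exists_abs_logHeight_parallelogram_le [DecidableEq K] [W.IsElliptic] :
    ∃ C, ∀ P Q : W.toAffine.Point,
      |logHeight (P + Q).xRep + logHeight (P - Q).xRep -
        2 * (logHeight P.xRep + logHeight Q.xRep)| ≤ C := by
  obtain ⟨C₁, hC₁⟩ := abs_logHeight_addSubMap_sub_two_mul_logHeight_le W
  obtain ⟨C₂, hC₂⟩ := exists_abs_logHeight_sym2x_sub_le W
  refine ⟨C₁ + 3 * C₂, fun P Q ↦ ?_⟩
  obtain ⟨c, hc, heval⟩ := exists_eval_addSubMap_sym2x W P Q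
  have hmap := hC₁ (P.sym2x Q)
  rw [heval, logHeight_smul_eq_logHeight _ hc] at hmap
  have hPQ := hC₂ P Q
  have haddsub := hC₂ (P + Q) (P - Q)
  rw [abs_le] at hmap hPQ haddsub ⊢
  constructor <;> linarith

variable [Northcott (logHeight₁ : K → ℝ)]

lemma northcott_logHeight_xRep : Northcott fun P : W.toAffine.Point ↦ logHeight P.xRep := by
  refine ⟨fun B ↦ Set.Finite.of_finite_fibers Point.xRep ?_ ?_⟩
  · have hfin : (insert ![1, 0] ((fun x : K ↦ ![x, 1]) '' {x | logHeight₁ x ≤ B})).Finite :=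
      ((Northcott.finite_le B).image _).insert _
    refine hfin.subset ?_
    rintro _ ⟨_ | ⟨x, y, h⟩, hP, rfl⟩
    · exact .inl rfl
    · exact .inr ⟨x, by simpa [logHeight₁_eq_logHeight] using hP, rfl⟩
  · rintro _ ⟨P, -, rfl⟩
    exact (Set.toFinite {P, -P}).subset fun Q hQ ↦ Point.eq_or_eq_neg_of_xRep_eq_xRep hQ.2

theorem fg_point_of_finiteIndex [DecidableEq K] [W.IsElliptic]
    (h : (nsmulAddMonoidHom (α := W.toAffine.Point) 2).range.FiniteIndex) :
    AddGroup.FG W.toAffine.Point := by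
  obtain ⟨C, hC⟩ := exists_abs_logHeight_parallelogram_le W
  have := northcott_logHeight_xRep W
  exact AddCommGroup.fg_of_descent' h (fun P ↦ logHeight_nonneg P.xRep) hC

end

/-! ### Selmer groups of Dedekind domains -/

section

variable {R : Type*} [CommRing R] {K : Type*} [Field K] [Algebra R K]
  [IsFractionRing R K]

lemma ker_toPrincipalIdeal :
    (toPrincipalIdeal R K).ker = (Units.map (algebraMap R K : R →* K)).range := by
  have mem_range_of_mem_ker {x : Kˣ} (hx : x ∈ (toPrincipalIdeal R K).ker) :
      ∃ r : R, algebraMap R K r = x := by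
    rw [MonoidHom.mem_ker, toPrincipalIdeal_eq_iff, Units.val_one] at hx
    exact (FractionalIdeal.mem_one_iff R⁰).mp (hx ▸ FractionalIdeal.mem_spanSingleton_self R⁰ _)
  ext x
  constructor
  · intro hx
    obtain ⟨r, hr⟩ := mem_range_of_mem_ker hx
    obtain ⟨s, hs⟩ := mem_range_of_mem_ker (inv_mem hx)
    have hrs : r * s = 1 := FaithfulSMul.algebraMap_injective R K <| by
      rw [map_mul, hr, hs, map_one, Units.mul_inv]
    exact ⟨⟨r, s, hrs, mul_comm r s ▸ hrs⟩, Units.ext hr⟩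
  · rintro ⟨u, rfl⟩
    rw [MonoidHom.mem_ker, toPrincipalIdeal_eq_iff, Units.val_one, Units.coe_map,
      MonoidHom.coe_coe, ← FractionalIdeal.coeIdeal_span_singleton,
      Ideal.span_singleton_eq_top.mpr u.isUnit, FractionalIdeal.coeIdeal_top]

end

section

variable {R : Type*} [CommRing R] [IsDedekindDomain R] {K : Type*} [Field K] [Algebra R K]
  [IsFractionRing R K]

lemma valuationOfNeZeroMod_mk_eq_one_iff (v : HeightOneSpectrum R) (n : ℕ) (x : Kˣ) :
    v.valuationOfNeZeroMod n (x : Kˣ ⧸ (powMonoidHom n : Kˣ →* Kˣ).range) = 1 ↔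
      (n : ℤ) ∣ (v.valuationOfNeZero x).toAdd := by
  rw [← ZMod.intCast_zmod_eq_zero_iff_dvd]
  rfl

lemma count_toPrincipalIdeal (v : HeightOneSpectrum R) (x : Kˣ) :
    FractionalIdeal.count K v (toPrincipalIdeal R K x : FractionalIdeal R⁰ K) =
      -(v.valuationOfNeZero x).toAdd := by
  classical
  have hx : (toPrincipalIdeal R K x : FractionalIdeal R⁰ K) =
      FractionalIdeal.spanSingleton R⁰ (algebraMap R K (IsLocalization.sec R⁰ (x : K)).2)⁻¹ *
        ↑(Ideal.span {(IsLocalization.sec R⁰ (x : K)).1}) := by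
    rw [FractionalIdeal.coeIdeal_span_singleton, FractionalIdeal.spanSingleton_mul_spanSingleton,
      coe_toPrincipalIdeal, inv_mul_eq_div, ← IsFractionRing.mk'_eq_div, IsLocalization.mk'_sec]
  rw [FractionalIdeal.count_well_defined K v (Units.ne_zero _) hx]
  change _ = -(_ - _)
  ring

lemma exists_pow_eq_of_dvd_count {n : ℕ} (hn : n ≠ 0) {I : FractionalIdeal R⁰ K} (hI : I ≠ 0)
    (h : ∀ v : HeightOneSpectrum R, (n : ℤ) ∣ FractionalIdeal.count K v I) :
    ∃ J : FractionalIdeal R⁰ K, J ^ n = I := by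
  choose m hm using h
  refine ⟨∏ᶠ v : HeightOneSpectrum R, (v.asIdeal : FractionalIdeal R⁰ K) ^ m v, ?_⟩
  have hfin : {v : HeightOneSpectrum R | FractionalIdeal.count K v I ≠ 0}.Finite :=
    FractionalIdeal.finite_factors I
  rw [finprod_pow (hfin.subset ?_)]
  · simp_rw [← zpow_natCast, ← zpow_mul, mul_comm (m _), ← hm]
    exact FractionalIdeal.finprod_heightOneSpectrum_factorization' K hI
  · intro v hv hcount
    have : m v = 0 := by simpa [hn, hm v] using hcount
    simp [this] at hv

lemma exists_pow_eq_toPrincipalIdeal {n : ℕ} (hn : n ≠ 0) {x : Kˣ}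
    (hx : ∀ v : HeightOneSpectrum R, (n : ℤ) ∣ (v.valuationOfNeZero x).toAdd) :
    ∃ J : (FractionalIdeal R⁰ K)ˣ, J ^ n = toPrincipalIdeal R K x := by
  obtain ⟨J, hJ⟩ := exists_pow_eq_of_dvd_count hn (toPrincipalIdeal R K x).ne_zero
    fun v ↦ by simpa only [count_toPrincipalIdeal, dvd_neg] using hx v
  have hJu : IsUnit J := (isUnit_pow_iff hn).mp (hJ ▸ (toPrincipalIdeal R K x).isUnit)
  exact ⟨hJu.unit, Units.ext hJ⟩

lemma exists_units_map_mul_pow_eq {n : ℕ} {x y : Kˣ} {I J : (FractionalIdeal R⁰ K)ˣ}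
    (hI : I ^ n = toPrincipalIdeal R K x) (hJ : J ^ n = toPrincipalIdeal R K y)
    (hIJ : I⁻¹ * J ∈ (toPrincipalIdeal R K).range) :
    ∃ (u : Rˣ) (t : Kˣ), Units.map (algebraMap R K : R →* K) u * t ^ n = x⁻¹ * y := by
  obtain ⟨t, ht⟩ := hIJ
  have hker : x⁻¹ * y * (t ^ n)⁻¹ ∈ (toPrincipalIdeal R K).ker := by
    rw [MonoidHom.mem_ker, map_mul, map_mul, map_inv, map_inv, map_pow, ht, ← hI, ← hJ, mul_pow,
      inv_pow, mul_inv_cancel]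
  rw [ker_toPrincipalIdeal] at hker
  obtain ⟨u, hu⟩ := hker
  exact ⟨u, t, by rw [hu, inv_mul_cancel_right]⟩

variable (R K) in
/-- The Selmer group `K(S, n)` of classes in `Kˣ / (Kˣ)ⁿ` whose valuation is divisible by `n` at
every prime outside `S`: Mathlib's `selmerGroup`, with its implicit parameters made explicit. -/
abbrev selmer (S : Set (HeightOneSpectrum R)) (n : ℕ) :
    Subgroup (Kˣ ⧸ (powMonoidHom n : Kˣ →* Kˣ).range) :=
  selmerGroup (S := S)

lemma exists_pow_eq_toPrincipalIdeal_out {n : ℕ} (hn : n ≠ 0) (x : selmer R K ∅ n) :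
    ∃ J : (FractionalIdeal R⁰ K)ˣ, J ^ n = toPrincipalIdeal R K x.1.out :=
  exists_pow_eq_toPrincipalIdeal hn fun v ↦ by
    rw [← valuationOfNeZeroMod_mk_eq_one_iff, QuotientGroup.out_eq']
    exact x.2 v (Set.notMem_empty v)

lemma finiteIndex_range_fromUnit [Finite (ClassGroup R)] {n : ℕ} (hn : n ≠ 0) :
    (selmerGroup.fromUnit (R := R) (K := K) (n := n)).range.FiniteIndex := by
  choose J hJ using exists_pow_eq_toPrincipalIdeal_out (R := R) (K := K) hn
  have : Finite ((FractionalIdeal R⁰ K)ˣ ⧸ (toPrincipalIdeal R K).range) :=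
    .of_equiv _ (ClassGroup.equiv K).toEquiv
  refine (finiteIndex_and_index_le_of_inv_mul_mem _ ∅
    (fun x ↦ QuotientGroup.mk (s := (toPrincipalIdeal R K).range) (J x))
    fun x _ y _ hxy ↦ ?_).1
  obtain ⟨u, t, hut⟩ := exists_units_map_mul_pow_eq (hJ x) (hJ y) (QuotientGroup.eq.mp hxy)
  refine ⟨u, Subtype.ext ?_⟩
  calc (QuotientGroup.mk (Units.map (algebraMap R K : R →* K) u) :
        Kˣ ⧸ (powMonoidHom n : Kˣ →* Kˣ).range)
      = QuotientGroup.mk (x.1.out⁻¹ * y.1.out) := QuotientGroup.eq.mpr ⟨t, by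
        rw [← hut, inv_mul_cancel_left, powMonoidHom_apply]⟩
    _ = x.1⁻¹ * y.1 := by rw [QuotientGroup.mk_mul, QuotientGroup.mk_inv, QuotientGroup.out_eq',
        QuotientGroup.out_eq']

lemma finite_selmer_empty [Finite (ClassGroup R)] [Group.FG Rˣ] {n : ℕ} (hn : n ≠ 0) :
    Finite (selmer R K ∅ n) := by
  let fromUnit := selmerGroup.fromUnit (R := R) (K := K) (n := n)
  have : Finite fromUnit.range := by
    refine CommGroup.finite_of_fg_isMulTorsion _ fun x ↦ isOfFinOrder_iff_pow_eq_one.mpr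
      ⟨n, Nat.pos_of_ne_zero hn, ?_⟩
    have hpow (q : Kˣ ⧸ (powMonoidHom n : Kˣ →* Kˣ).range) : q ^ n = 1 :=
      QuotientGroup.induction_on q fun t ↦ (QuotientGroup.eq_one_iff _).mpr ⟨t, rfl⟩
    exact Subtype.ext (Subtype.ext (hpow _))
  exact (Subgroup.finite_iff_finite_and_finiteIndex fromUnit.range).mpr
    ⟨this, finiteIndex_range_fromUnit hn⟩

lemma finite_selmer_and_card_selmer_le {S : Set (HeightOneSpectrum R)} (hS : S.Finite) {n : ℕ}
    (hn : n ≠ 0) [Finite (selmer R K ∅ n)] :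
    Finite (selmer R K S n) ∧
      Nat.card (selmer R K S n) ≤ n ^ S.ncard * Nat.card (selmer R K ∅ n) := by
  have := hS.to_subtype
  have : NeZero n := ⟨hn⟩
  let val := selmerGroup.valuation (R := R) (K := K) (S := S) (n := n)
  have : Finite (Multiplicative (ZMod n)) := inferInstanceAs (Finite (ZMod n))
  have hker : Nat.card val.ker = Nat.card (selmer R K ∅ n) := by
    rw [selmerGroup.valuation_ker_eq]
    exact Nat.card_congr
      (Subgroup.subgroupOfEquivOfLe (selmerGroup.monotone (Set.empty_subset S))).toEquiv
  have hrange : Nat.card val.range ≤ n ^ S.ncard :=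
    (Subgroup.card_le_card_group _).trans_eq <| by
      rw [Nat.card_fun, Nat.card_congr Multiplicative.toAdd, Nat.card_zmod, Nat.card_coe_set_eq]
  have hcard := val.ker.card_mul_index
  rw [Subgroup.index_ker, hker] at hcard
  refine ⟨Nat.finite_of_card_ne_zero <| hcard ▸ mul_ne_zero Nat.card_pos.ne' Nat.card_pos.ne', ?_⟩
  rw [← hcard, mul_comm]
  exact Nat.mul_le_mul_right _ hrange

lemma two_dvd_valuationOfNeZero_of_isSquare {v : HeightOneSpectrum R} {x : Kˣ}
    (h : IsSquare (v.valuation K (x : K))) : 2 ∣ (v.valuationOfNeZero x).toAdd := by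
  obtain ⟨g, hg⟩ := h
  have hg0 : g ≠ 0 := by
    rintro rfl
    simp at hg
  obtain ⟨m, rfl⟩ := WithZero.ne_zero_iff_exists.mp hg0
  rw [← valuationOfNeZero_eq, ← WithZero.coe_mul, WithZero.coe_inj] at hg
  exact ⟨m.toAdd, by rw [hg, toAdd_mul, two_mul]⟩

open scoped Classical in
/-- The class of `x` in `Kˣ / (Kˣ)²`, with junk value `1` at `x = 0`. -/
noncomputable def sqClass (x : K) : Kˣ ⧸ (powMonoidHom 2 : Kˣ →* Kˣ).range :=
  if hx : x = 0 then 1 else QuotientGroup.mk (Units.mk0 x hx)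

lemma isSquare_mul_of_sqClass_eq {x y : K} (hx : x ≠ 0) (hy : y ≠ 0)
    (h : sqClass x = sqClass y) : IsSquare (x * y) := by
  rw [sqClass, sqClass, dif_neg hx, dif_neg hy, QuotientGroup.eq] at h
  obtain ⟨t, ht⟩ := h
  have hxy : y = x * (t : K) ^ 2 := by
    rw [← Units.val_pow_eq_pow_val, ← powMonoidHom_apply, ht]
    simp [hx]
  exact ⟨x * t, by rw [hxy]; ring⟩

lemma sqClass_mem_selmer {S : Set (HeightOneSpectrum R)} {x : K}
    (h : ∀ v ∉ S, IsSquare (v.valuation K x)) : sqClass x ∈ selmer R K S 2 := by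
  rw [sqClass]
  split_ifs with hx
  · exact one_mem _
  · intro v hv
    rw [valuationOfNeZeroMod_mk_eq_one_iff]
    exact two_dvd_valuationOfNeZero_of_isSquare (h v hv)

end

/-! ### Primes dividing differences of roots -/

section

lemma ncard_primesOver_le_finrank {R : Type*} [CommRing R] [IsDomain R] (p : Ideal R) [p.IsPrime]
    (S : Type*) [CommRing S] [Algebra R S] [Module.Finite R S] [Module.Flat R S] :
    (p.primesOver S).ncard ≤ Module.finrank R S := by
  have : Fintype (p.primesOver S) := (Algebra.QuasiFinite.finite_primesOver p).fintype
  calc (p.primesOver S).ncard = ∑ _q : p.primesOver S, 1 := by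
        rw [← Nat.card_coe_set_eq, Nat.card_eq_fintype_card, Fintype.card_eq_sum_ones]
    _ ≤ ∑ q : p.primesOver S, q.1.ramificationIdx R * q.1.inertiaDeg R := by
        refine Finset.sum_le_sum fun q _ ↦ ?_
        have := q.2.1
        exact Nat.mul_pos (Ideal.ramificationIdx_pos q.1 R) (Ideal.inertiaDeg_pos q.1 R)
    _ = Module.finrank R S := p.sum_ramification_inertia_eq_finrank S

end

section

variable (R : Type*) [CommRing R] [IsDedekindDomain R] {K : Type*} [Field K] [Algebra R K]
  [IsFractionRing R K]

/-- The primes at which `x` is not a unit, i.e. (for `x ≠ 0`) those that occur in the factorisation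
of the fractional ideal generated by `x`. -/
def primeSupport (x : K) : Set (HeightOneSpectrum R) :=
  {v | v.valuation K x ≠ 1}

lemma finite_primeSupport {x : K} (hx : x ≠ 0) : (primeSupport R x).Finite := by
  refine ((Support.finite R x).union (Support.finite R x⁻¹)).subset fun v hv ↦ ?_
  rcases lt_or_gt_of_ne hv with hlt | hgt
  · refine .inr ?_
    change 1 < v.valuation K x⁻¹
    rw [map_inv₀]
    exact (one_lt_inv₀ (zero_lt_iff.mpr (by simpa using hx))).mpr hlt
  · exact .inl hgt

lemma primeSupport_mul_subset (x y : K) :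
    primeSupport R (x * y) ⊆ primeSupport R x ∪ primeSupport R y := by
  intro v hv
  by_contra! h
  simp only [primeSupport, Set.mem_union, Set.mem_ofPred_eq, not_or, not_not, map_mul] at h hv
  simp [h] at hv

/-- The primes at which some difference `eᵢ - eⱼ` is not a unit. Away from `2`, the curve
`y² = (x - e₁)(x - e₂)(x - e₃)` has good reduction at all other primes. -/
def badPrimes (e₁ e₂ e₃ : K) : Set (HeightOneSpectrum R) :=
  primeSupport R (e₁ - e₂) ∪ primeSupport R (e₁ - e₃) ∪ primeSupport R (e₂ - e₃)

lemma finite_badPrimes {e₁ e₂ e₃ : K} (h₁₂ : e₁ ≠ e₂) (h₁₃ : e₁ ≠ e₃) (h₂₃ : e₂ ≠ e₃) :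
    (badPrimes R e₁ e₂ e₃).Finite :=
  ((finite_primeSupport R (sub_ne_zero.mpr h₁₂)).union
    (finite_primeSupport R (sub_ne_zero.mpr h₁₃))).union
    (finite_primeSupport R (sub_ne_zero.mpr h₂₃))

lemma badPrimes_mul_subset (d e₁ e₂ e₃ : K) :
    badPrimes R (d * e₁) (d * e₂) (d * e₃) ⊆ primeSupport R d ∪ badPrimes R e₁ e₂ e₃ := by
  simp only [badPrimes, ← mul_sub]
  have := primeSupport_mul_subset R d (e₁ - e₂)
  have := primeSupport_mul_subset R d (e₁ - e₃)
  have := primeSupport_mul_subset R d (e₂ - e₃)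
  grind

end

section

variable (K : Type*) [Field K] [NumberField K]

lemma exists_mem_primeFactors_of_mem_primeSupport {D : ℤ} (hD : D ≠ 0)
    {v : HeightOneSpectrum (𝓞 K)} (hv : v ∈ primeSupport (𝓞 K) (D : K)) :
    ∃ p ∈ D.natAbs.primeFactors, v.asIdeal ∈ (Ideal.span {(p : ℤ)}).primesOver (𝓞 K) := by
  have hDv : (D : 𝓞 K) ∈ v.asIdeal := by
    rw [← v.valuation_lt_one_iff_mem (K := K)]
    refine lt_of_le_of_ne (v.valuation_le_one _) ?_
    simpa [primeSupport] using hv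
  have : NeZero v.asIdeal := ⟨v.ne_bot⟩
  refine ⟨Ideal.absNorm (v.asIdeal.under ℤ), Nat.mem_primeFactors.mpr
    ⟨Nat.absNorm_under_prime v.asIdeal, ?_, Int.natAbs_ne_zero.mpr hD⟩,
    v.isPrime, Int.liesOver_span_absNorm _⟩
  exact Int.natCast_dvd.mp (Int.cast_mem_ideal_iff.mp hDv)

lemma ncard_primeSupport_intCast_le {D : ℤ} (hD : D ≠ 0) :
    (primeSupport (𝓞 K) (D : K)).ncard ≤ Module.finrank ℚ K * D.natAbs.primeFactors.card := by
  let primesAbove (p : ℕ) : Set (Ideal (𝓞 K)) := (Ideal.span {(p : ℤ)}).primesOver (𝓞 K)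
  have hprime {p : ℕ} (hp : p ∈ D.natAbs.primeFactors) : (Ideal.span {(p : ℤ)}).IsPrime :=
    (Ideal.span_singleton_prime (by simpa using (Nat.prime_of_mem_primeFactors hp).ne_zero)).mpr
      (Nat.prime_iff_prime_int.mp (Nat.prime_of_mem_primeFactors hp))
  have hfin : (⋃ p ∈ D.natAbs.primeFactors, primesAbove p).Finite :=
    D.natAbs.primeFactors.finite_toSet.biUnion fun p hp ↦
      have := hprime hp
      Algebra.QuasiFinite.finite_primesOver _
  have hinj : Set.InjOn asIdeal (primeSupport (𝓞 K) (D : K)) :=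
    fun _ _ _ _ h ↦ HeightOneSpectrum.ext h
  have himage : asIdeal '' primeSupport (𝓞 K) (D : K) ⊆
      ⋃ p ∈ D.natAbs.primeFactors, primesAbove p := by
    rintro _ ⟨v, hv, rfl⟩
    simpa only [Set.mem_iUnion, exists_prop] using
      exists_mem_primeFactors_of_mem_primeSupport K hD hv
  calc (primeSupport (𝓞 K) (D : K)).ncard
      = (asIdeal '' primeSupport (𝓞 K) (D : K)).ncard := hinj.ncard_image.symm
    _ ≤ (⋃ p ∈ D.natAbs.primeFactors, primesAbove p).ncard := Set.ncard_le_ncard himage hfin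
    _ ≤ ∑ p ∈ D.natAbs.primeFactors, (primesAbove p).ncard := Finset.set_ncard_biUnion_le _ _
    _ ≤ ∑ _p ∈ D.natAbs.primeFactors, Module.finrank ℚ K := by
      refine Finset.sum_le_sum fun p hp ↦ ?_
      have := hprime hp
      exact (ncard_primesOver_le_finrank _ (𝓞 K)).trans_eq (RingOfIntegers.rank K)
    _ = Module.finrank ℚ K * D.natAbs.primeFactors.card := by
      rw [Finset.sum_const, smul_eq_mul, mul_comm]

end

/-! ### Halving points on curves with rational 2-torsion -/

section

variable {K : Type*} [Field K]

/-- The Weierstrass curve `y² = (x - e₁)(x - e₂)(x - e₃)`, i.e. a curve with a model without `xy`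
and `y` terms all of whose `2`-torsion is rational. -/
def curveOfRoots (e₁ e₂ e₃ : K) : WeierstrassCurve K :=
  ⟨0, -(e₁ + e₂ + e₃), 0, e₁ * e₂ + e₁ * e₃ + e₂ * e₃, -(e₁ * e₂ * e₃)⟩

namespace curveOfRoots

variable {e₁ e₂ e₃ : K}

lemma equation_iff {x y : K} : (curveOfRoots e₁ e₂ e₃).toAffine.Equation x y ↔
    y ^ 2 = (x - e₁) * (x - e₂) * (x - e₃) := by
  rw [Affine.equation_iff, curveOfRoots]
  grind

lemma Δ_eq : (curveOfRoots e₁ e₂ e₃).Δ =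
    (2 ^ 2 * ((e₁ - e₂) * (e₁ - e₃) * (e₂ - e₃))) ^ 2 := by
  simp only [curveOfRoots, WeierstrassCurve.Δ, WeierstrassCurve.b₂, WeierstrassCurve.b₄,
    WeierstrassCurve.b₆, WeierstrassCurve.b₈]
  ring

lemma isElliptic_iff : (curveOfRoots e₁ e₂ e₃).IsElliptic ↔
    (2 : K) ≠ 0 ∧ e₁ ≠ e₂ ∧ e₁ ≠ e₃ ∧ e₂ ≠ e₃ := by
  rw [WeierstrassCurve.isElliptic_iff, isUnit_iff_ne_zero, Δ_eq]
  simp [sub_eq_zero, and_assoc]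

lemma sub_roots_ne_zero_of_Y_ne_zero {x y : K}
    (h : (curveOfRoots e₁ e₂ e₃).toAffine.Equation x y) (hy : y ≠ 0) :
    x - e₁ ≠ 0 ∧ x - e₂ ≠ 0 ∧ x - e₃ ≠ 0 := by
  have := pow_ne_zero 2 hy
  rw [equation_iff.mp h] at this
  simpa [and_assoc] using this

lemma isSquare_mul_sub_third {x y x' y' : K}
    (h : (curveOfRoots e₁ e₂ e₃).toAffine.Equation x y)
    (h' : (curveOfRoots e₁ e₂ e₃).toAffine.Equation x' y') (hy : y ≠ 0) (hy' : y' ≠ 0)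
    (hsq₁ : IsSquare ((x - e₁) * (x' - e₁))) (hsq₂ : IsSquare ((x - e₂) * (x' - e₂))) :
    IsSquare ((x - e₃) * (x' - e₃)) := by
  obtain ⟨hx₁, hx₂, -⟩ := sub_roots_ne_zero_of_Y_ne_zero h hy
  obtain ⟨hx'₁, hx'₂, -⟩ := sub_roots_ne_zero_of_Y_ne_zero h' hy'
  have hprod : (x - e₃) * (x' - e₃) =
      (y * y') ^ 2 / ((x - e₁) * (x' - e₁) * ((x - e₂) * (x' - e₂))) := by
    rw [eq_div_iff (by positivity), mul_pow, equation_iff.mp h, equation_iff.mp h']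
    ring
  rw [hprod]
  exact (IsSquare.sq _).div (hsq₁.mul hsq₂)

lemma exists_finset_forall_notMem_Y_ne_zero [(curveOfRoots e₁ e₂ e₃).IsElliptic] :
    ∃ F : Finset (curveOfRoots e₁ e₂ e₃).toAffine.Point, F.card ≤ 4 ∧
      ∀ P, P ∉ F → ∃ x y h, P = .some x y h ∧ y ≠ 0 := by
  classical
  have hroot {e : K} (he : (e - e₁) * (e - e₂) * (e - e₃) = 0) :
      (curveOfRoots e₁ e₂ e₃).toAffine.Nonsingular e 0 := by
    rw [← equation_iff_nonsingular, curveOfRoots.equation_iff, he, sq, zero_mul]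
  refine ⟨{0, .some e₁ 0 (hroot (by ring)), .some e₂ 0 (hroot (by ring)),
    .some e₃ 0 (hroot (by ring))}, Finset.card_le_four, ?_⟩
  rintro (_ | ⟨x, y, h⟩) hP
  · exact absurd (Finset.mem_insert_self _ _) hP
  · refine ⟨x, y, h, rfl, ?_⟩
    rintro rfl
    have hx : (x - e₁) * (x - e₂) * (x - e₃) = 0 := by
      rw [← equation_iff.mp h.1, sq, zero_mul]
    simp only [Finset.mem_insert, Finset.mem_singleton, Point.some.injEq, and_true, not_or] at hP
    simp [sub_eq_zero, hP] at hx

variable [DecidableEq K]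

/- The line through the two points meets the curve in a third point with the same `x`-coordinate
as their sum; evaluating the resulting factorisation of the cubic at a root `e` gives a square. -/
lemma mul_mul_addX_sub_eq_sq {x y x' y' e : K}
    (h : (curveOfRoots e₁ e₂ e₃).toAffine.Equation x y)
    (h' : (curveOfRoots e₁ e₂ e₃).toAffine.Equation x' y') (hx : x ≠ x')
    (he : (e - e₁) * (e - e₂) * (e - e₃) = 0) :
    (x - e) * (x' - e) * ((curveOfRoots e₁ e₂ e₃).toAffine.addX x x'
      ((curveOfRoots e₁ e₂ e₃).toAffine.slope x x' y y') - e) =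
      ((curveOfRoots e₁ e₂ e₃).toAffine.slope x x' y y' * (e - x) + y) ^ 2 := by
  have hx' : x - x' ≠ 0 := sub_ne_zero.mpr hx
  have hslope : (curveOfRoots e₁ e₂ e₃).toAffine.slope x x' y y' * (x - x') = y - y' := by
    rw [slope_of_X_ne hx, div_mul_cancel₀ _ hx']
  rw [equation_iff] at h h'
  generalize (curveOfRoots e₁ e₂ e₃).toAffine.slope x x' y y' = l at hslope ⊢
  simp only [addX, curveOfRoots]
  apply mul_right_cancel₀ hx'
  obtain rfl : y' = y - l * (x - x') := by linear_combination hslope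
  linear_combination -(e - x') * h + (e - x) * h' - (x - x') * he

lemma isSquare_addX_sub {x y x' y' e : K}
    (h : (curveOfRoots e₁ e₂ e₃).toAffine.Equation x y)
    (h' : (curveOfRoots e₁ e₂ e₃).toAffine.Equation x' y') (hx : x ≠ x')
    (he : (e - e₁) * (e - e₂) * (e - e₃) = 0) (hxe : x - e ≠ 0) (hxe' : x' - e ≠ 0)
    (hsq : IsSquare ((x - e) * (x' - e))) :
    IsSquare ((curveOfRoots e₁ e₂ e₃).toAffine.addX x x'
      ((curveOfRoots e₁ e₂ e₃).toAffine.slope x x' y y') - e) := by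
  rw [← mul_div_cancel_left₀ (_ - e) (mul_ne_zero hxe hxe'), mul_mul_addX_sub_eq_sq h h' hx he]
  exact (IsSquare.sq _).div hsq

end curveOfRoots

variable [DecidableEq K]

lemma mem_range_two_nsmul_of_xRep_eq {W : WeierstrassCurve K} {P Q : W.toAffine.Point}
    (h : P.xRep = (Q + Q).xRep) : P ∈ (nsmulAddMonoidHom (α := W.toAffine.Point) 2).range := by
  rcases Point.eq_or_eq_neg_of_xRep_eq_xRep h with rfl | rfl
  · exact ⟨Q, two_nsmul Q⟩
  · exact neg_mem ⟨Q, two_nsmul Q⟩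

namespace curveOfRoots

variable {e₁ e₂ e₃ : K}

/- The point `(x + z₁z₂ + z₁z₃ + z₂z₃, (z₁ + z₂)(z₁ + z₃)(z₂ + z₃))` has tangent slope
`z₁ + z₂ + z₃` and doubles to a point above `x`. -/
lemma exists_xRep_add_self_eq (x z₁ z₂ z₃ : K)
    [(curveOfRoots (x - z₁ ^ 2) (x - z₂ ^ 2) (x - z₃ ^ 2)).IsElliptic] :
    ∃ Q : (curveOfRoots (x - z₁ ^ 2) (x - z₂ ^ 2) (x - z₃ ^ 2)).toAffine.Point,
      (Q + Q).xRep = ![x, 1] := by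
  set W := curveOfRoots (x - z₁ ^ 2) (x - z₂ ^ 2) (x - z₃ ^ 2) with hW
  obtain ⟨h2, h₁₂, h₁₃, h₂₃⟩ := isElliptic_iff.mp ‹W.IsElliptic›
  have h₁₂ : z₁ + z₂ ≠ 0 := by grind
  have h₁₃ : z₁ + z₃ ≠ 0 := by grind
  have h₂₃ : z₂ + z₃ ≠ 0 := by grind
  set X := x + z₁ * z₂ + z₁ * z₃ + z₂ * z₃ with hX
  set Y := (z₁ + z₂) * (z₁ + z₃) * (z₂ + z₃) with hY
  have hQ : W.toAffine.Nonsingular X Y := by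
    rw [← equation_iff_nonsingular, curveOfRoots.equation_iff]
    ring
  have hY0 : Y ≠ W.toAffine.negY X Y := by
    have : Y * 2 ≠ 0 := by positivity
    simp only [negY, hW, curveOfRoots]
    grind
  have hslope : W.toAffine.slope X X Y Y = z₁ + z₂ + z₃ := by
    rw [slope_of_Y_ne rfl hY0, div_eq_iff (sub_ne_zero.mpr hY0)]
    simp only [negY, hW, curveOfRoots, hX, hY]
    ring
  refine ⟨.some X Y hQ, ?_⟩
  rw [Point.add_self_of_Y_ne hY0, Point.xRep_some, hslope]
  simp only [addX, hW, curveOfRoots, hX]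
  congrm ![?_, 1]
  ring

lemma mem_range_two_nsmul_of_isSquare [(curveOfRoots e₁ e₂ e₃).IsElliptic] {x y : K}
    (h : (curveOfRoots e₁ e₂ e₃).toAffine.Nonsingular x y)
    (h₁ : IsSquare (x - e₁)) (h₂ : IsSquare (x - e₂)) (h₃ : IsSquare (x - e₃)) :
    Point.some x y h ∈ (nsmulAddMonoidHom 2).range := by
  obtain ⟨z₁, hz₁⟩ := isSquare_iff_exists_sq _ |>.mp h₁
  obtain ⟨z₂, hz₂⟩ := isSquare_iff_exists_sq _ |>.mp h₂
  obtain ⟨z₃, hz₃⟩ := isSquare_iff_exists_sq _ |>.mp h₃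
  obtain rfl : x - z₁ ^ 2 = e₁ := by rw [← hz₁, sub_sub_cancel]
  obtain rfl : x - z₂ ^ 2 = e₂ := by rw [← hz₂, sub_sub_cancel]
  obtain rfl : x - z₃ ^ 2 = e₃ := by rw [← hz₃, sub_sub_cancel]
  obtain ⟨Q, hQ⟩ := exists_xRep_add_self_eq x z₁ z₂ z₃
  exact mem_range_two_nsmul_of_xRep_eq (hQ ▸ Point.xRep_some ..)

lemma add_mem_range_two_nsmul [(curveOfRoots e₁ e₂ e₃).IsElliptic] {x y x' y' : K}
    (h : (curveOfRoots e₁ e₂ e₃).toAffine.Nonsingular x y)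
    (h' : (curveOfRoots e₁ e₂ e₃).toAffine.Nonsingular x' y') (hy : y ≠ 0) (hy' : y' ≠ 0)
    (hsq₁ : IsSquare ((x - e₁) * (x' - e₁))) (hsq₂ : IsSquare ((x - e₂) * (x' - e₂))) :
    Point.some x y h + Point.some x' y' h' ∈ (nsmulAddMonoidHom 2).range := by
  by_cases hx : x = x'
  · rcases (Point.X_eq_iff (h₁ := h) (h₂ := h')).mp hx with hPQ | hPQ
    · exact hPQ ▸ ⟨_, two_nsmul _⟩
    · rw [hPQ, neg_add_cancel]
      exact zero_mem _
  · have hsq₃ := isSquare_mul_sub_third h.1 h'.1 hy hy' hsq₁ hsq₂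
    obtain ⟨hx₁, hx₂, hx₃⟩ := sub_roots_ne_zero_of_Y_ne_zero h.1 hy
    obtain ⟨hx'₁, hx'₂, hx'₃⟩ := sub_roots_ne_zero_of_Y_ne_zero h'.1 hy'
    rw [Point.add_of_X_ne hx]
    exact mem_range_two_nsmul_of_isSquare _
      (isSquare_addX_sub h.1 h'.1 hx (by ring) hx₁ hx'₁ hsq₁)
      (isSquare_addX_sub h.1 h'.1 hx (by ring) hx₂ hx'₂ hsq₂)
      (isSquare_addX_sub h.1 h'.1 hx (by ring) hx₃ hx'₃ hsq₃)

end curveOfRoots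

end

/-! ### The 2-descent map -/

lemma isSquare_valuation_sub {K Γ₀ : Type*} [Field K] [LinearOrderedCommGroupWithZero Γ₀]
    (v : Valuation K Γ₀) {x y e₁ e₂ e₃ : K} (h₁₂ : v (e₁ - e₂) = 1) (h₁₃ : v (e₁ - e₃) = 1)
    (h : y ^ 2 = (x - e₁) * (x - e₂) * (x - e₃)) : IsSquare (v (x - e₁)) := by
  obtain rfl | hxe := eq_or_ne x e₁
  · rw [sub_self, map_zero]
    exact IsSquare.zero
  have hvy := congrArg v h
  rw [← sub_add_sub_cancel x e₁ e₂, ← sub_add_sub_cancel x e₁ e₃, map_pow, map_mul, map_mul] at hvy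
  rcases lt_trichotomy (v (x - e₁)) 1 with hlt | heq | hgt
  · rw [v.map_add_eq_of_lt_right (hlt.trans_eq h₁₂.symm),
      v.map_add_eq_of_lt_right (hlt.trans_eq h₁₃.symm), h₁₂, h₁₃, mul_one, mul_one] at hvy
    exact hvy ▸ IsSquare.sq _
  · exact heq ▸ IsSquare.one
  · rw [v.map_add_eq_of_lt_left (h₁₂.trans_lt hgt),
      v.map_add_eq_of_lt_left (h₁₃.trans_lt hgt)] at hvy
    have hne : v (x - e₁) ≠ 0 := by simpa [sub_eq_zero] using hxe
    have hdiv : v (x - e₁) = v y ^ 2 / v (x - e₁) ^ 2 := by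
      rw [hvy, eq_div_iff (pow_ne_zero 2 hne), sq, mul_assoc]
    rw [hdiv, ← div_pow]
    exact IsSquare.sq _

namespace curveOfRoots

variable {R : Type*} [CommRing R] [IsDedekindDomain R] {K : Type*} [Field K] [Algebra R K]
  [IsFractionRing R K] {e₁ e₂ e₃ : K}

variable (R) in
lemma sqClass_sub_mem_selmer {x y : K} (h : (curveOfRoots e₁ e₂ e₃).toAffine.Equation x y) :
    sqClass (x - e₁) ∈ selmer R K (badPrimes R e₁ e₂ e₃) 2 ∧
      sqClass (x - e₂) ∈ selmer R K (badPrimes R e₁ e₂ e₃) 2 := by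
  rw [equation_iff] at h
  have hgood {v : HeightOneSpectrum R} (hv : v ∉ badPrimes R e₁ e₂ e₃) :
      v.valuation K (e₁ - e₂) = 1 ∧ v.valuation K (e₁ - e₃) = 1 ∧ v.valuation K (e₂ - e₃) = 1 := by
    simpa [badPrimes, primeSupport, and_assoc] using hv
  constructor <;> refine sqClass_mem_selmer fun v hv ↦ ?_
  · exact isSquare_valuation_sub _ (hgood hv).1 (hgood hv).2.1 h
  · refine isSquare_valuation_sub _ ?_ (hgood hv).2.2 (h.trans (by rw [mul_comm (x - e₁)]))
    rw [Valuation.map_sub_swap, (hgood hv).1]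

variable (R) in
/-- The complete `2`-descent map `P ↦ (x - e₁, x - e₂)` of `y² = (x - e₁)(x - e₂)(x - e₃)`. At the
four points of order dividing `2`, where an entry would be `0` or `∞`, it does not have the values
that make it a homomorphism. -/
noncomputable def descentMap : (curveOfRoots e₁ e₂ e₃).toAffine.Point →
    selmer R K (badPrimes R e₁ e₂ e₃) 2 × selmer R K (badPrimes R e₁ e₂ e₃) 2
  | .zero => 1
  | .some _ _ h =>
    (⟨_, (sqClass_sub_mem_selmer R h.1).1⟩, ⟨_, (sqClass_sub_mem_selmer R h.1).2⟩)

variable [DecidableEq K] [(curveOfRoots e₁ e₂ e₃).IsElliptic]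

lemma neg_add_mem_range_two_nsmul_of_descentMap_eq {x y x' y' : K}
    (h : (curveOfRoots e₁ e₂ e₃).toAffine.Nonsingular x y)
    (h' : (curveOfRoots e₁ e₂ e₃).toAffine.Nonsingular x' y') (hy : y ≠ 0) (hy' : y' ≠ 0)
    (heq : descentMap R (.some x y h) = descentMap R (.some x' y' h')) :
    -Point.some x y h + Point.some x' y' h' ∈ (nsmulAddMonoidHom 2).range := by
  obtain ⟨hx₁, hx₂, -⟩ := sub_roots_ne_zero_of_Y_ne_zero h.1 hy
  obtain ⟨hx'₁, hx'₂, -⟩ := sub_roots_ne_zero_of_Y_ne_zero h'.1 hy'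
  simp only [descentMap, Prod.mk.injEq, Subtype.mk.injEq] at heq
  have hadd := add_mem_range_two_nsmul h h' hy hy' (isSquare_mul_of_sqClass_eq hx₁ hx'₁ heq.1)
    (isSquare_mul_of_sqClass_eq hx₂ hx'₂ heq.2)
  have hsub : -Point.some x y h + Point.some x' y' h' =
      Point.some x y h + Point.some x' y' h' - 2 • Point.some x y h := by abel
  rw [hsub]
  exact sub_mem hadd ⟨_, rfl⟩

variable (R) [Finite (selmer R K ∅ 2)]

lemma finiteIndex_and_index_range_two_nsmul_le :
    (nsmulAddMonoidHom (α := (curveOfRoots e₁ e₂ e₃).toAffine.Point) 2).range.FiniteIndex ∧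
      (nsmulAddMonoidHom (α := (curveOfRoots e₁ e₂ e₃).toAffine.Point) 2).range.index ≤
        (2 ^ (badPrimes R e₁ e₂ e₃).ncard * Nat.card (selmer R K ∅ 2)) ^ 2 + 4 := by
  obtain ⟨-, h₁₂, h₁₃, h₂₃⟩ := isElliptic_iff.mp ‹(curveOfRoots e₁ e₂ e₃).IsElliptic›
  obtain ⟨_, hcard⟩ := finite_selmer_and_card_selmer_le (K := K) (finite_badPrimes R h₁₂ h₁₃ h₂₃)
    two_ne_zero
  obtain ⟨F, hF, hY⟩ := exists_finset_forall_notMem_Y_ne_zero (e₁ := e₁) (e₂ := e₂) (e₃ := e₃)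
  obtain ⟨hfin, hindex⟩ := finiteIndex_and_index_le_of_neg_add_mem (nsmulAddMonoidHom 2).range F
    (descentMap R) fun P hP Q hQ heq ↦ by
      obtain ⟨x, y, h, rfl, hy⟩ := hY P hP
      obtain ⟨x', y', h', rfl, hy'⟩ := hY Q hQ
      exact neg_add_mem_range_two_nsmul_of_descentMap_eq h h' hy hy' heq
  refine ⟨hfin, hindex.trans (Nat.add_le_add ?_ hF)⟩
  rw [Nat.card_prod, ← sq]
  exact Nat.pow_le_pow_left hcard 2

variable [AdmissibleAbsValues K] [Northcott (logHeight₁ : K → ℝ)]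

theorem fg_point_and_finrank_point_le :
    AddGroup.FG (curveOfRoots e₁ e₂ e₃).toAffine.Point ∧
      Module.finrank ℤ (curveOfRoots e₁ e₂ e₃).toAffine.Point ≤
        2 * (badPrimes R e₁ e₂ e₃).ncard + (Nat.card (selmer R K ∅ 2) ^ 2 + 4) := by
  obtain ⟨hfin, hindex⟩ := finiteIndex_and_index_range_two_nsmul_le R
    (e₁ := e₁) (e₂ := e₂) (e₃ := e₃)
  have hfg := fg_point_of_finiteIndex _ hfin
  have : Module.Finite ℤ (curveOfRoots e₁ e₂ e₃).toAffine.Point :=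
    Module.Finite.iff_addGroup_fg.mpr hfg
  refine ⟨hfg, (Nat.pow_le_pow_iff_right one_lt_two).mp ?_⟩
  set s := (badPrimes R e₁ e₂ e₃).ncard
  set n := Nat.card (selmer R K ∅ 2)
  calc 2 ^ Module.finrank ℤ (curveOfRoots e₁ e₂ e₃).toAffine.Point
      ≤ (nsmulAddMonoidHom (α := (curveOfRoots e₁ e₂ e₃).toAffine.Point) 2).range.index :=
        Nat.le_of_dvd (Nat.pos_of_ne_zero hfin.index_ne_zero)
          (pow_finrank_dvd_index_range_nsmul _ 2)
    _ ≤ (2 ^ s * n) ^ 2 + 4 := hindex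
    _ ≤ (2 ^ s * n) ^ 2 + 2 ^ (2 * s) * 4 := by
      gcongr
      exact Nat.le_mul_of_pos_left 4 (by positivity)
    _ = 2 ^ (2 * s) * (n ^ 2 + 4) := by ring
    _ ≤ 2 ^ (2 * s) * 2 ^ (n ^ 2 + 4) := by
      gcongr
      exact Nat.lt_two_pow_self.le
    _ = 2 ^ (2 * s + (n ^ 2 + 4)) := (pow_add ..).symm

end curveOfRoots

/-! ### Twists over number fields -/

section

variable {K : Type*} [Field K] [NumberField K] [DecidableEq K]

theorem exists_fg_point_and_finrank_point_intCast_mul_le (e₁ e₂ e₃ : K)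
    [(curveOfRoots e₁ e₂ e₃).IsElliptic] :
    ∃ c : ℕ, ∀ D : ℤ, D ≠ 0 →
      AddGroup.FG (curveOfRoots (D * e₁) (D * e₂) (D * e₃)).toAffine.Point ∧
        Module.finrank ℤ (curveOfRoots (D * e₁) (D * e₂) (D * e₃)).toAffine.Point ≤
          2 * (Module.finrank ℚ K * D.natAbs.primeFactors.card) + c := by
  have : Group.FG (𝓞 K)ˣ := Group.fg_iff_monoid_fg.mpr inferInstance
  have : Finite (selmer (𝓞 K) K ∅ 2) := finite_selmer_empty two_ne_zero
  obtain ⟨-, h₁₂, h₁₃, h₂₃⟩ :=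
    curveOfRoots.isElliptic_iff.mp ‹(curveOfRoots e₁ e₂ e₃).IsElliptic›
  refine ⟨2 * (badPrimes (𝓞 K) e₁ e₂ e₃).ncard + (Nat.card (selmer (𝓞 K) K ∅ 2) ^ 2 + 4),
    fun D hD ↦ ?_⟩
  have hDK : (D : K) ≠ 0 := Int.cast_ne_zero.mpr hD
  have : (curveOfRoots (D * e₁) (D * e₂) (D * e₃)).IsElliptic := by
    simpa [curveOfRoots.isElliptic_iff, hDK] using ⟨h₁₂, h₁₃, h₂₃⟩
  obtain ⟨hfg, hrank⟩ := curveOfRoots.fg_point_and_finrank_point_le (𝓞 K)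
    (e₁ := D * e₁) (e₂ := D * e₂) (e₃ := D * e₃)
  have hfinite : (primeSupport (𝓞 K) (D : K) ∪ badPrimes (𝓞 K) e₁ e₂ e₃).Finite :=
    (finite_primeSupport _ hDK).union (finite_badPrimes _ h₁₂ h₁₃ h₂₃)
  have hbad := (Set.ncard_le_ncard (badPrimes_mul_subset (𝓞 K) (D : K) e₁ e₂ e₃) hfinite).trans
    (Set.ncard_union_le ..)
  have hD_primes := ncard_primeSupport_intCast_le K hD
  exact ⟨hfg, by lia⟩

end

section

open scoped Nat

lemma finrank_splittingField_le_factorial {F : Type*} [Field F] [PerfectField F]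
    (p : Polynomial F) : Module.finrank F p.SplittingField ≤ p.natDegree ! := by
  have : IsGalois F p.SplittingField := .mk
  have : Fact (p.map (algebraMap F p.SplittingField)).Splits := ⟨Polynomial.SplittingField.splits p⟩
  calc Module.finrank F p.SplittingField
      = Nat.card p.Gal := (IsGalois.card_aut_eq_finrank F p.SplittingField).symm
    _ ≤ Nat.card (Equiv.Perm (p.rootSet p.SplittingField)) :=
      Nat.card_le_card_of_injective _ (Polynomial.Gal.galActionHom_injective p p.SplittingField)
    _ = (p.rootSet p.SplittingField).ncard ! := by rw [Nat.card_perm, Nat.card_coe_set_eq]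
    _ ≤ p.natDegree ! := Nat.factorial_le (p.ncard_rootSet_le p.SplittingField)

variable {F : Type*} [Field F]

lemma isElliptic_of_four_mul_cube_add_ne_zero (h2 : (2 : F) ≠ 0) {a b : F}
    (hab : 4 * a ^ 3 + 27 * b ^ 2 ≠ 0) : (⟨0, 0, 0, a, b⟩ : WeierstrassCurve F).IsElliptic := by
  have : (⟨0, 0, 0, a, b⟩ : WeierstrassCurve F).IsShortNF := ⟨rfl, rfl, rfl⟩
  rw [WeierstrassCurve.isElliptic_iff, Δ_of_isShortNF, isUnit_iff_ne_zero,
    show (-16 : F) = -2 ^ 4 by norm_num]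
  exact mul_ne_zero (neg_ne_zero.mpr (pow_ne_zero 4 h2)) hab

lemma exists_baseChange_splittingField_eq_curveOfRoots (a₂ a₄ a₆ : F) :
    ∃ e₁ e₂ e₃ : (Cubic.toPoly ⟨1, a₂, a₄, a₆⟩).SplittingField,
      (⟨0, a₂, 0, a₄, a₆⟩ : WeierstrassCurve F).baseChange
        (Cubic.toPoly ⟨1, a₂, a₄, a₆⟩).SplittingField = curveOfRoots e₁ e₂ e₃ := by
  have ha : (⟨1, a₂, a₄, a₆⟩ : Cubic F).a ≠ 0 := one_ne_zero
  obtain ⟨e₁, e₂, e₃, hroots⟩ :=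
    (Cubic.splits_iff_roots_eq_three ha).mp (Polynomial.SplittingField.splits _)
  refine ⟨e₁, e₂, e₃, ?_⟩
  have h₂ := Cubic.b_eq_three_roots ha hroots
  have h₄ := Cubic.c_eq_three_roots ha hroots
  have h₆ := Cubic.d_eq_three_roots ha hroots
  simp only [map_one, one_mul] at h₂ h₄ h₆
  ext <;> simp [curveOfRoots, h₂, h₄, h₆]

lemma finrank_point_le_finrank_point_baseChange [DecidableEq F] (W : WeierstrassCurve F)
    (L : Type*) [Field L] [DecidableEq L] [Algebra F L]
    (hfg : AddGroup.FG (W.baseChange L).toAffine.Point) :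
    Module.finrank ℤ W.toAffine.Point ≤ Module.finrank ℤ (W.baseChange L).toAffine.Point := by
  suffices ∀ V : WeierstrassCurve F, V = W.baseChange F → Module.finrank ℤ V.toAffine.Point ≤
      Module.finrank ℤ (W.baseChange L).toAffine.Point from this W W.map_id.symm
  rintro _ rfl
  have : Module.Finite ℤ (W.baseChange L).toAffine.Point := Module.Finite.iff_addGroup_fg.mpr hfg
  exact LinearMap.finrank_le_finrank_of_injective
    (f := (Point.map (W' := W) (Algebra.ofId F L)).toIntLinearMap) (Point.map_injective _)

end

lemma baseChange_quadTwist_eq_curveOfRoots {K : Type*} [Field K] [Algebra ℚ K] {a b : ℚ}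
    {e₁ e₂ e₃ : K}
    (h : (⟨0, 0, 0, a, b⟩ : WeierstrassCurve ℚ).baseChange K = curveOfRoots e₁ e₂ e₃) (D : ℤ) :
    (quadTwist a b D).baseChange K = curveOfRoots (D * e₁) (D * e₂) (D * e₃) := by
  have h₂ : (0 : K) = -(e₁ + e₂ + e₃) := by simpa [curveOfRoots] using congrArg a₂ h
  have h₄ : algebraMap ℚ K a = e₁ * e₂ + e₁ * e₃ + e₂ * e₃ := congrArg a₄ h
  have h₆ : algebraMap ℚ K b = -(e₁ * e₂ * e₃) := congrArg a₆ h
  ext <;> simp only [quadTwist, curveOfRoots, WeierstrassCurve.baseChange, map_a₁, map_a₂, map_a₃,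
    map_a₄, map_a₆, map_zero, map_mul, map_pow, map_intCast, h₄, h₆]
  · linear_combination D * h₂
  · ring
  · ring

end TwoDescent

open TwoDescent in
theorem rank_quadTwist_le_general (a b : ℚ) (hab : 4 * a ^ 3 + 27 * b ^ 2 ≠ 0) :
    ∃ c : ℕ, ∀ D : ℤ, D ≠ 0 →
      grpRank (quadTwist a b D).toAffine.Point ≤ 12 * D.natAbs.primeFactors.card + c := by
  classical
  let cubic : Cubic ℚ := ⟨1, 0, a, b⟩
  let K := cubic.toPoly.SplittingField
  have : NumberField K := { }
  have hdeg : Module.finrank ℚ K ≤ 6 := (finrank_splittingField_le_factorial cubic.toPoly).trans_eq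
    (by rw [Cubic.natDegree_of_a_ne_zero one_ne_zero]; rfl)
  obtain ⟨e₁, e₂, e₃, hE⟩ := exists_baseChange_splittingField_eq_curveOfRoots 0 a b
  have := isElliptic_of_four_mul_cube_add_ne_zero two_ne_zero hab
  have : (curveOfRoots e₁ e₂ e₃).IsElliptic :=
    hE ▸ inferInstanceAs (WeierstrassCurve.map _ _).IsElliptic
  obtain ⟨c, hc⟩ := exists_fg_point_and_finrank_point_intCast_mul_le e₁ e₂ e₃
  refine ⟨c, fun D hD ↦ ?_⟩
  specialize hc D hD
  rw [← baseChange_quadTwist_eq_curveOfRoots hE] at hc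
  calc grpRank (quadTwist a b D).toAffine.Point
      = Module.finrank ℤ (quadTwist a b D).toAffine.Point := grpRank_eq_finrank _
    _ ≤ Module.finrank ℤ ((quadTwist a b D).baseChange K).toAffine.Point :=
      finrank_point_le_finrank_point_baseChange _ K hc.1
    _ ≤ 2 * (Module.finrank ℚ K * D.natAbs.primeFactors.card) + c := hc.2
    _ ≤ 12 * D.natAbs.primeFactors.card + c := by nlinarith

/-- For an elliptic curve `E : y² = x³ + ax + b` over `ℚ` there is a constant `c(E)` such
that every quadratic twist satisfies `rank E^(D)(ℚ) ≤ 12·ω(D) + c(E)`. -/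
theorem rank_quadTwist_le (a b : ℚ) (hab : 4 * a ^ 3 + 27 * b ^ 2 ≠ 0) :
    ∃ c : ℝ, ∀ D : ℤ, D ≠ 0 → Squarefree D →
      (grpRank (quadTwist a b D).toAffine.Point : ℝ) ≤
        12 * (D.natAbs.primeFactors.card : ℝ) + c := by
  obtain ⟨c, hc⟩ := rank_quadTwist_le_general a b hab
  exact ⟨c, fun D hD _ ↦ mod_cast hc D hD⟩
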